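/- For every pair (u, v) of real-valued functions on Ω that are locally bounded relative to Ω and satisfy u(x) ≤ v(x) for all x ∈ Ω, both pairs F(I(S(v))) = (I(I(S(v))), S(I(S(v)))) and F(S(I(u))) = (I(S(I(u))), S(S(I(u)))) are Hausdorff continuous. -/

import Mathlib

open Set

/-- Points of `ℝⁿ`. -/
abbrev Pt (n : ℕ) := EuclideanSpace ℝ (Fin n)

/-- Lower Baire operator `I(D,Ω,f)(x) = sup_{δ>0} inf { f y : y ∈ B_δ(x) ∩ D }`,
where `B_δ(x) = { y ∈ Ω : ‖y - x‖ < δ }`. -/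
noncomputable def Ilow {n : ℕ} (D Om : Set (Pt n)) (f : Pt n → ℝ) (x : Pt n) : ℝ :=
  sSup {a : ℝ | ∃ δ : ℝ, 0 < δ ∧
    a = sInf (f '' {y | y ∈ Om ∧ ‖y - x‖ < δ ∧ y ∈ D})}

/-- Upper Baire operator `S(D,Ω,f)(x) = inf_{δ>0} sup { f y : y ∈ B_δ(x) ∩ D }`. -/
noncomputable def Shigh {n : ℕ} (D Om : Set (Pt n)) (f : Pt n → ℝ) (x : Pt n) : ℝ :=
  sInf {a : ℝ | ∃ δ : ℝ, 0 < δ ∧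
    a = sSup (f '' {y | y ∈ Om ∧ ‖y - x‖ < δ ∧ y ∈ D})}

/-- `f`, defined on `D ⊆ Ω`, is locally bounded relative to `Ω`. -/
def LocBddOn {n : ℕ} (Om D : Set (Pt n)) (f : Pt n → ℝ) : Prop :=
  ∀ x ∈ Om, ∃ δ : ℝ, 0 < δ ∧ ∃ M : ℝ,
    ∀ y, y ∈ Om → ‖y - x‖ < δ → y ∈ D → |f y| < M

/-- `(u, v)` encodes an interval-valued function `x ↦ [u x, v x]` on `Om`. -/
def IntervalPair {n : ℕ} (Om : Set (Pt n)) (u v : Pt n → ℝ) : Prop :=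
  LocBddOn Om Om u ∧ LocBddOn Om Om v ∧ ∀ x ∈ Om, u x ≤ v x

/-- The pair `(u, v)` is S-continuous on `Om`: `I(u) = u` and `S(v) = v`. -/
def SCont {n : ℕ} (Om : Set (Pt n)) (u v : Pt n → ℝ) : Prop :=
  ∀ x ∈ Om, Ilow Om Om u x = u x ∧ Shigh Om Om v x = v x

/-- The pair `(u, v)` is Hausdorff continuous on `Om`. -/
def HCont {n : ℕ} (Om : Set (Pt n)) (u v : Pt n → ℝ) : Prop :=
  ∀ p q : Pt n → ℝ, LocBddOn Om Om p → LocBddOn Om Om q →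
    (∀ x ∈ Om, u x ≤ p x ∧ p x ≤ q x ∧ q x ≤ v x) →
    ∀ x ∈ Om, Ilow Om Om p x = u x ∧ Shigh Om Om q x = v x

/-- `(u, v)` is an H-continuous interval pair on `Om`. -/
def HContPair {n : ℕ} (Om : Set (Pt n)) (u v : Pt n → ℝ) : Prop :=
  IntervalPair Om u v ∧ HCont Om u v

/-- Lower endpoint of the pointwise interval product. -/
noncomputable def imin {n : ℕ} (u₁ v₁ u₂ v₂ : Pt n → ℝ) (x : Pt n) : ℝ :=
  min (min (u₁ x * u₂ x) (u₁ x * v₂ x)) (min (v₁ x * u₂ x) (v₁ x * v₂ x))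

/-- Upper endpoint of the pointwise interval product. -/
noncomputable def imax {n : ℕ} (u₁ v₁ u₂ v₂ : Pt n → ℝ) (x : Pt n) : ℝ :=
  max (max (u₁ x * u₂ x) (u₁ x * v₂ x)) (max (v₁ x * u₂ x) (v₁ x * v₂ x))

/-- `(pl, pu)` is the H-continuous pair contained pointwise in the interval sum of
`(u₁, v₁)` and `(u₂, v₂)`, i.e. `(pl, pu) = (u₁,v₁) ⊕ (u₂,v₂)`. -/
def IsOplus {n : ℕ} (Om : Set (Pt n)) (u₁ v₁ u₂ v₂ pl pu : Pt n → ℝ) : Prop :=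
  HContPair Om pl pu ∧
    ∀ x ∈ Om, u₁ x + u₂ x ≤ pl x ∧ pl x ≤ pu x ∧ pu x ≤ v₁ x + v₂ x

/-- `(ql, qu)` is the H-continuous pair contained pointwise in the interval product of
`(u₁, v₁)` and `(u₂, v₂)`, i.e. `(ql, qu) = (u₁,v₁) ⊗ (u₂,v₂)`. -/
def IsOtimes {n : ℕ} (Om : Set (Pt n)) (u₁ v₁ u₂ v₂ ql qu : Pt n → ℝ) : Prop :=
  HContPair Om ql qu ∧
    ∀ x ∈ Om, imin u₁ v₁ u₂ v₂ x ≤ ql x ∧ ql x ≤ qu x ∧ qu x ≤ imax u₁ v₁ u₂ v₂ x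

open Filter Topology Bornology

/- The operators `I` and `S` are characterized by universal properties: `I f` is the greatest lower
semicontinuous minorant of `f`, and `S f` is its least upper semicontinuous majorant. Let `g` be
upper semicontinuous and `f = I g`. Then `S f ≤ g`, so `f ≤ p ≤ q ≤ S f` gives `f ≤ I p ≤ I g = f`
and `S f ≤ S q ≤ S f`; hence `(f, S f)` is Hausdorff continuous. This applies to `g = S v`, and the
statement about `S (I u)` follows by negation.

A locally bounded function may be unbounded on a bounded part of its domain, where `sInf` and `sSup`
return `0`, and then `I f` need not lie below `f`. For `f` unbounded below on some bounded set,
`I f = I (f ⊔ 0)`, so replacing `f` by `f ⊔ 0` restores the universal property. -/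

section OneSidedBounds

variable {α : Type*} [Bornology α] {s : Set α} {f g : α → ℝ}

/-- `f` is bounded below on the bounded subsets of `s`. Unlike local boundedness, this makes the
infima over balls of every radius that enter `Ilow` genuine. -/
def BddBelowOnBounded (s : Set α) (f : α → ℝ) : Prop :=
  ∀ ⦃t⦄, t ⊆ s → IsBounded t → BddBelow (f '' t)

/-- `f` is bounded above on the bounded subsets of `s`; this makes the suprema entering `Shigh`
genuine. -/
def BddAboveOnBounded (s : Set α) (f : α → ℝ) : Prop :=
  ∀ ⦃t⦄, t ⊆ s → IsBounded t → BddAbove (f '' t)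

theorem bddBelowOnBounded_neg : BddBelowOnBounded s (-f) ↔ BddAboveOnBounded s f := by
  have image_neg (t : Set α) : (-f) '' t = -(f '' t) := by
    rw [← Set.image_neg_eq_neg, Set.image_image]
    rfl
  simp only [BddBelowOnBounded, BddAboveOnBounded, image_neg, bddBelow_neg]

theorem BddBelowOnBounded.mono (hf : BddBelowOnBounded s f) (hfg : ∀ y ∈ s, f y ≤ g y) :
    BddBelowOnBounded s g := by
  intro t hts ht
  obtain ⟨m, hm⟩ := hf hts ht
  refine ⟨m, forall_mem_image.2 fun y hy => ?_⟩
  exact (hm (mem_image_of_mem f hy)).trans (hfg y (hts hy))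

theorem BddAboveOnBounded.mono (hg : BddAboveOnBounded s g) (hfg : ∀ y ∈ s, f y ≤ g y) :
    BddAboveOnBounded s f :=
  bddBelowOnBounded_neg.1 <|
    (bddBelowOnBounded_neg.2 hg).mono fun y hy => neg_le_neg (hfg y hy)

open Classical in
/-- The function that `Ilow` effectively sees: `f ⊔ 0` if `f` is unbounded below on some bounded
subset of `s`, because the junk value `sInf = 0` is then attained at large radii, and `f` itself
otherwise. -/
noncomputable def lowerTrunc (s : Set α) (f : α → ℝ) : α → ℝ :=
  if BddBelowOnBounded s f then f else f ⊔ 0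

theorem bddBelowOnBounded_lowerTrunc (s : Set α) (f : α → ℝ) :
    BddBelowOnBounded s (lowerTrunc s f) := by
  unfold lowerTrunc
  split_ifs with h
  · exact h
  · exact fun t _ _ => ⟨0, forall_mem_image.2 fun _ _ => le_sup_right⟩

theorem le_lowerTrunc (s : Set α) (f : α → ℝ) : f ≤ lowerTrunc s f := by
  unfold lowerTrunc
  split_ifs
  exacts [le_rfl, le_sup_left]

theorem lowerTrunc_le_sup_zero (s : Set α) (f : α → ℝ) : lowerTrunc s f ≤ f ⊔ 0 := by
  unfold lowerTrunc
  split_ifs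
  exacts [le_sup_left, le_rfl]

theorem BddAboveOnBounded.lowerTrunc (hf : BddAboveOnBounded s f) (t : Set α) :
    BddAboveOnBounded s (lowerTrunc t f) := by
  intro r hrs hr
  obtain ⟨M, hM⟩ := hf hrs hr
  refine ⟨M ⊔ 0, forall_mem_image.2 fun y hy => ?_⟩
  exact (lowerTrunc_le_sup_zero t f y).trans (sup_le_sup_right (hM (mem_image_of_mem f hy)) 0)

theorem upperSemicontinuousOn_lowerTrunc [TopologicalSpace α] (hf : UpperSemicontinuousOn f s)
    (t : Set α) : UpperSemicontinuousOn (lowerTrunc t f) s := by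
  unfold lowerTrunc
  split_ifs
  exacts [hf, hf.sup upperSemicontinuousOn_const]

end OneSidedBounds

theorem subset_closure_inter_self {α : Type*} [TopologicalSpace α] (s : Set α) :
    s ⊆ closure (s ∩ s) :=
  fun _ hx => subset_closure ⟨hx, hx⟩

theorem lowerSemicontinuousOn_neg {α : Type*} [TopologicalSpace α] {s : Set α} {f : α → ℝ} :
    LowerSemicontinuousOn (-f) s ↔ UpperSemicontinuousOn f s := by
  have neg_anti : Antitone fun a : ℝ => -a := fun _ _ => neg_le_neg
  refine ⟨fun hf => ?_, fun hf => continuous_neg.comp_upperSemicontinuousOn_antitone hf neg_anti⟩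
  simpa only [Function.comp_def, Pi.neg_apply, neg_neg] using
    continuous_neg.comp_lowerSemicontinuousOn_antitone hf neg_anti

theorem sInf_image_sup_zero (A : Set ℝ) : sInf ((· ⊔ 0) '' A) = sInf A ⊔ 0 := by
  rcases A.eq_empty_or_nonempty with rfl | hA
  · simp
  by_cases hbdd : BddBelow A
  · exact ((monotone_id.sup monotone_const).map_csInf_of_continuousAt
      (by fun_prop) hA hbdd).symm
  · obtain ⟨a, ha, ha_neg⟩ : ∃ a ∈ A, a < 0 := not_bddBelow_iff.1 hbdd 0
    have zero_isLeast : IsLeast ((· ⊔ 0) '' A) 0 :=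
      ⟨⟨a, ha, sup_eq_right.2 ha_neg.le⟩, forall_mem_image.2 fun _ _ => le_sup_right⟩
    rw [zero_isLeast.csInf_eq, Real.sInf_of_not_bddBelow hbdd, sup_idem]

section BaireOperators

variable {n : ℕ} {Om D : Set (Pt n)} {f g : Pt n → ℝ} {x : Pt n}

theorem hasBasis_nhdsWithin_inter (Om D : Set (Pt n)) (x : Pt n) :
    (𝓝[Om ∩ D] x).HasBasis (0 < ·) fun δ : ℝ => {y | y ∈ Om ∧ ‖y - x‖ < δ ∧ y ∈ D} := by
  refine Metric.nhdsWithin_basis_ball.congr (fun _ => Iff.rfl) fun δ _ => ?_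
  ext y
  simp only [mem_inter_iff, mem_ball_iff_norm, mem_ofPred_eq]
  tauto

theorem isBounded_inter_norm_sub_lt (Om D : Set (Pt n)) (x : Pt n) (δ : ℝ) :
    IsBounded {y | y ∈ Om ∧ ‖y - x‖ < δ ∧ y ∈ D} :=
  Metric.isBounded_ball.subset fun _ hy => mem_ball_iff_norm.2 hy.2.1

theorem LocBddOn.isBoundedUnder_le (hf : LocBddOn Om D f) (hx : x ∈ Om) :
    IsBoundedUnder (· ≤ ·) (𝓝[Om ∩ D] x) f := by
  obtain ⟨δ, hδ, M, hM⟩ := hf x hx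
  refine ⟨M, eventually_map.2 <| (hasBasis_nhdsWithin_inter Om D x).eventually_iff.2 ⟨δ, hδ, ?_⟩⟩
  exact fun y ⟨hy, hyx, hyD⟩ => (le_abs_self (f y)).trans (hM y hy hyx hyD).le

theorem LocBddOn.neg (hf : LocBddOn Om D f) : LocBddOn Om D (-f) := by
  simpa only [LocBddOn, Pi.neg_apply, abs_neg] using hf

theorem locBddOn_of_bddOnBounded (hbelow : BddBelowOnBounded Om f)
    (habove : BddAboveOnBounded Om f) : LocBddOn Om D f := by
  intro x _
  have ball_subset : {y | y ∈ Om ∧ ‖y - x‖ < 1 ∧ y ∈ D} ⊆ Om := fun _ hy => hy.1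
  have isBounded_ball := isBounded_inter_norm_sub_lt Om D x 1
  obtain ⟨m, hm⟩ := hbelow ball_subset isBounded_ball
  obtain ⟨M, hM⟩ := habove ball_subset isBounded_ball
  refine ⟨1, one_pos, max |m| |M| + 1, fun y hy hyx hyD => ?_⟩
  have hmf := hm (mem_image_of_mem f ⟨hy, hyx, hyD⟩)
  have hfM := hM (mem_image_of_mem f ⟨hy, hyx, hyD⟩)
  exact (abs_le_max_abs_abs hmf hfM).trans_lt (lt_add_one _)

theorem ilow_neg (D Om : Set (Pt n)) (f : Pt n → ℝ) : Ilow D Om (-f) = -Shigh D Om f := by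
  have sInf_image_neg (t : Set (Pt n)) : sInf ((fun y => -f y) '' t) = -sSup (f '' t) := by
    rw [Real.sInf_def, ← Set.image_neg_eq_neg, image_image]
    simp only [neg_neg]
  ext x
  simp only [Ilow, Shigh, Pi.neg_apply, sInf_image_neg]
  rw [Real.sInf_def, neg_neg]
  congr 1
  ext a
  simp only [mem_ofPred_eq, Set.mem_neg, neg_eq_iff_eq_neg]

theorem shigh_neg (D Om : Set (Pt n)) (f : Pt n → ℝ) : Shigh D Om (-f) = -Ilow D Om f := by
  rw [← neg_neg (Shigh D Om (-f)), ← ilow_neg, neg_neg]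

theorem ilow_lowerTrunc (D Om : Set (Pt n)) (f : Pt n → ℝ) :
    Ilow D Om (lowerTrunc (Om ∩ D) f) = Ilow D Om f := by
  unfold lowerTrunc
  split_ifs with hf
  · rfl
  have image_sup_zero (t : Set (Pt n)) : (f ⊔ 0) '' t = (· ⊔ 0) '' (f '' t) :=
    (image_image (· ⊔ 0) f t).symm
  ext x
  obtain ⟨r, hr, sInf_eq_zero⟩ : ∃ r : ℝ, 0 < r ∧
      sInf (f '' {y | y ∈ Om ∧ ‖y - x‖ < r ∧ y ∈ D}) = 0 := by
    simp only [BddBelowOnBounded, not_forall] at hf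
    obtain ⟨t, ht, ht_bdd, hft⟩ := hf
    obtain ⟨r, hr, htr⟩ := ht_bdd.subset_ball_lt 0 x
    refine ⟨r, hr, Real.sInf_of_not_bddBelow fun hbdd => hft (hbdd.mono (image_mono ?_))⟩
    exact fun y hy => ⟨(ht hy).1, mem_ball_iff_norm.1 (htr hy), (ht hy).2⟩
  refine csSup_eq_csSup_of_forall_exists_le ?_ ?_
  · rintro _ ⟨δ, hδ, rfl⟩
    rw [image_sup_zero, sInf_image_sup_zero]
    rcases max_choice (sInf (f '' {y | y ∈ Om ∧ ‖y - x‖ < δ ∧ y ∈ D})) 0 with hmax | hmax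
    · exact ⟨_, ⟨δ, hδ, rfl⟩, hmax.le⟩
    · exact ⟨_, ⟨r, hr, rfl⟩, (hmax.trans sInf_eq_zero.symm).le⟩
  · rintro _ ⟨δ, hδ, rfl⟩
    refine ⟨_, ⟨δ, hδ, rfl⟩, ?_⟩
    rw [image_sup_zero, sInf_image_sup_zero]
    exact le_sup_left

theorem ilow_eq_liminf (hf : BddBelowOnBounded (Om ∩ D) f) (hx : x ∈ closure (Om ∩ D)) :
    Ilow D Om f x = liminf f (𝓝[Om ∩ D] x) := by
  have basis := hasBasis_nhdsWithin_inter Om D x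
  have := mem_closure_iff_nhdsWithin_neBot.1 hx
  rw [liminf_eq]
  refine csSup_eq_csSup_of_forall_exists_le ?_ fun a ha => ?_
  · rintro _ ⟨δ, hδ, rfl⟩
    have image_bdd := hf (fun _ hy => ⟨hy.1, hy.2.2⟩) (isBounded_inter_norm_sub_lt Om D x δ)
    refine ⟨_, basis.eventually_iff.2 ⟨δ, hδ, fun y hy => ?_⟩, le_rfl⟩
    exact csInf_le image_bdd (mem_image_of_mem f hy)
  · obtain ⟨δ, hδ, ha⟩ := basis.eventually_iff.1 ha
    exact ⟨_, ⟨δ, hδ, rfl⟩,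
      le_csInf ((Filter.nonempty_of_mem (basis.mem_of_mem hδ)).image f) (forall_mem_image.2 ha)⟩

theorem le_ilow (hf : IsBoundedUnder (· ≤ ·) (𝓝[Om ∩ D] x) f) (hx : x ∈ closure (Om ∩ D)) {c : ℝ}
    (hc : ∀ᶠ y in 𝓝[Om ∩ D] x, c ≤ lowerTrunc (Om ∩ D) f y) : c ≤ Ilow D Om f x := by
  have := mem_closure_iff_nhdsWithin_neBot.1 hx
  have trunc_bdd : IsBoundedUnder (· ≤ ·) (𝓝[Om ∩ D] x) (lowerTrunc (Om ∩ D) f) :=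
    (hf.sup isBoundedUnder_const).mono_le (.of_forall (lowerTrunc_le_sup_zero _ f))
  rw [← ilow_lowerTrunc, ilow_eq_liminf (bddBelowOnBounded_lowerTrunc _ f) hx]
  exact le_liminf_of_le trunc_bdd.isCoboundedUnder_ge hc

theorem eventually_lt_lowerTrunc_of_lt_ilow (hx : x ∈ closure (Om ∩ D)) {c : ℝ}
    (hc : c < Ilow D Om f x) : ∀ᶠ y in 𝓝[Om ∩ D] x, c < lowerTrunc (Om ∩ D) f y := by
  have trunc_bdd := bddBelowOnBounded_lowerTrunc (Om ∩ D) f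
  rw [← ilow_lowerTrunc, ilow_eq_liminf trunc_bdd hx] at hc
  refine eventually_lt_of_lt_liminf hc ?_
  obtain ⟨m, hm⟩ := trunc_bdd (fun _ hy => ⟨hy.1, hy.2.2⟩) (isBounded_inter_norm_sub_lt Om D x 1)
  refine ⟨m, eventually_map.2 ?_⟩
  exact (hasBasis_nhdsWithin_inter Om D x).eventually_iff.2
    ⟨1, one_pos, fun y hy => hm (mem_image_of_mem _ hy)⟩

theorem lowerSemicontinuousOn_ilow (hD : Om ⊆ closure (Om ∩ D)) (hf : LocBddOn Om D f) :
    LowerSemicontinuousOn (Ilow D Om f) Om := by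
  intro x hx c hc
  obtain ⟨b, hcb, hb⟩ := exists_between hc
  have eventually_lt := eventually_lt_lowerTrunc_of_lt_ilow (hD hx) hb
  filter_upwards [nhdsWithin_le_nhds (eventually_nhds_nhdsWithin.2 eventually_lt),
    self_mem_nhdsWithin] with y hby hy
  exact hcb.trans_le (le_ilow (hf.isBoundedUnder_le hy) (hD hy) (hby.mono fun _ => le_of_lt))

theorem bddBelowOnBounded_ilow (hD : Om ⊆ closure (Om ∩ D)) (hf : LocBddOn Om D f) :
    BddBelowOnBounded Om (Ilow D Om f) := by
  intro t ht ht_bdd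
  obtain ⟨m, hm⟩ := bddBelowOnBounded_lowerTrunc (Om ∩ D) f inter_subset_left
    (ht_bdd.thickening (δ := 1).subset inter_subset_right)
  refine ⟨m, forall_mem_image.2 fun y hy => ?_⟩
  refine le_ilow (hf.isBoundedUnder_le (ht hy)) (hD (ht hy)) ?_
  have thickening_mem : Metric.thickening 1 t ∈ 𝓝 y :=
    Metric.isOpen_thickening.mem_nhds (Metric.self_subset_thickening one_pos t hy)
  filter_upwards [self_mem_nhdsWithin, nhdsWithin_le_nhds thickening_mem] with z hz hzt
  exact hm (mem_image_of_mem _ ⟨hz, hzt⟩)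

theorem ilow_le (hf : BddBelowOnBounded Om f) (hx : x ∈ Om) : Ilow Om Om f x ≤ f x := by
  refine le_of_forall_lt fun c hc => ?_
  have hx' : x ∈ Om ∩ Om := ⟨hx, hx⟩
  have := (eventually_lt_lowerTrunc_of_lt_ilow (subset_closure hx') hc).self_of_nhdsWithin hx'
  rwa [lowerTrunc, inter_self, if_pos hf] at this

theorem le_ilow_of_lowerSemicontinuousOn (hf : LocBddOn Om Om f) (hg : LowerSemicontinuousOn g Om)
    (hgf : ∀ y ∈ Om, g y ≤ f y) (hx : x ∈ Om) : g x ≤ Ilow Om Om f x := by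
  refine le_of_forall_lt_imp_le_of_dense fun c hc => ?_
  refine le_ilow (hf.isBoundedUnder_le hx) (subset_closure_inter_self Om hx) ?_
  rw [inter_self]
  filter_upwards [hg x hx c hc, self_mem_nhdsWithin] with y hcy hy
  exact hcy.le.trans ((hgf y hy).trans (le_lowerTrunc Om f y))

theorem upperSemicontinuousOn_shigh (hD : Om ⊆ closure (Om ∩ D)) (hf : LocBddOn Om D f) :
    UpperSemicontinuousOn (Shigh D Om f) Om := by
  rw [← lowerSemicontinuousOn_neg, ← ilow_neg]
  exact lowerSemicontinuousOn_ilow hD hf.neg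

theorem bddAboveOnBounded_shigh (hD : Om ⊆ closure (Om ∩ D)) (hf : LocBddOn Om D f) :
    BddAboveOnBounded Om (Shigh D Om f) := by
  rw [← bddBelowOnBounded_neg, ← ilow_neg]
  exact bddBelowOnBounded_ilow hD hf.neg

theorem le_shigh (hf : BddAboveOnBounded Om f) (hx : x ∈ Om) : f x ≤ Shigh Om Om f x := by
  have := ilow_le (bddBelowOnBounded_neg.2 hf) hx
  rwa [ilow_neg, Pi.neg_apply, Pi.neg_apply, neg_le_neg_iff] at this

theorem shigh_le_of_upperSemicontinuousOn (hf : LocBddOn Om Om f) (hg : UpperSemicontinuousOn g Om)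
    (hfg : ∀ y ∈ Om, f y ≤ g y) (hx : x ∈ Om) : Shigh Om Om f x ≤ g x := by
  have := le_ilow_of_lowerSemicontinuousOn hf.neg (lowerSemicontinuousOn_neg.2 hg)
    (fun y hy => neg_le_neg (hfg y hy)) hx
  rwa [ilow_neg, Pi.neg_apply, Pi.neg_apply, neg_le_neg_iff] at this

theorem HContPair.neg (hfg : HContPair Om f g) : HContPair Om (-g) (-f) := by
  obtain ⟨⟨hf, hg, hle⟩, hcont⟩ := hfg
  refine ⟨⟨hg.neg, hf.neg, fun x hx => neg_le_neg (hle x hx)⟩, fun p q hp hq hpq x hx => ?_⟩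
  have := hcont (-q) (-p) hq.neg hp.neg (fun y hy => ?_) x hx
  · rw [ilow_neg, shigh_neg] at this
    exact ⟨neg_eq_iff_eq_neg.1 this.2, neg_eq_iff_eq_neg.1 this.1⟩
  · obtain ⟨hgp, hpq, hqf⟩ := hpq y hy
    exact ⟨le_neg_of_le_neg hqf, neg_le_neg hpq, neg_le_of_neg_le hgp⟩

theorem hContPair_of_extremal (hfg : ∀ y ∈ Om, f y ≤ g y)
    (hf : BddBelowOnBounded Om f) (hf_lsc : LowerSemicontinuousOn f Om)
    (hf_max : ∀ h, LowerSemicontinuousOn h Om → (∀ y ∈ Om, h y ≤ g y) → ∀ y ∈ Om, h y ≤ f y)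
    (hg : BddAboveOnBounded Om g) (hg_usc : UpperSemicontinuousOn g Om)
    (hg_min : ∀ h, UpperSemicontinuousOn h Om → (∀ y ∈ Om, f y ≤ h y) → ∀ y ∈ Om, g y ≤ h y) :
    HContPair Om f g := by
  have dense := subset_closure_inter_self Om
  refine ⟨⟨locBddOn_of_bddOnBounded hf (hg.mono hfg),
    locBddOn_of_bddOnBounded (hf.mono hfg) hg, hfg⟩, fun p q hp hq hpq x hx => ⟨?_, ?_⟩⟩
  · have f_le_p : ∀ y ∈ Om, f y ≤ p y := fun y hy => (hpq y hy).1
    have ilow_p_le_g : ∀ y ∈ Om, Ilow Om Om p y ≤ g y := fun y hy =>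
      (ilow_le (hf.mono f_le_p) hy).trans ((hpq y hy).2.1.trans (hpq y hy).2.2)
    exact (hf_max _ (lowerSemicontinuousOn_ilow dense hp) ilow_p_le_g x hx).antisymm
      (le_ilow_of_lowerSemicontinuousOn hp hf_lsc f_le_p hx)
  · have q_le_g : ∀ y ∈ Om, q y ≤ g y := fun y hy => (hpq y hy).2.2
    have f_le_shigh_q : ∀ y ∈ Om, f y ≤ Shigh Om Om q y := fun y hy =>
      ((hpq y hy).1.trans (hpq y hy).2.1).trans (le_shigh (hg.mono q_le_g) hy)
    exact (shigh_le_of_upperSemicontinuousOn hq hg_usc q_le_g hx).antisymm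
      (hg_min _ (upperSemicontinuousOn_shigh dense hq) f_le_shigh_q x hx)

theorem hContPair_ilow_of_bddOnBounded (hbelow : BddBelowOnBounded Om g)
    (habove : BddAboveOnBounded Om g) (hg : UpperSemicontinuousOn g Om) :
    HContPair Om (Ilow Om Om (Ilow Om Om g)) (Shigh Om Om (Ilow Om Om g)) := by
  have dense := subset_closure_inter_self Om
  have g_locBdd : LocBddOn Om Om g := locBddOn_of_bddOnBounded hbelow habove
  set f := Ilow Om Om g
  have f_le_g : ∀ y ∈ Om, f y ≤ g y := fun y hy => ilow_le hbelow hy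
  have f_below : BddBelowOnBounded Om f := bddBelowOnBounded_ilow dense g_locBdd
  have f_above : BddAboveOnBounded Om f := habove.mono f_le_g
  have f_locBdd : LocBddOn Om Om f := locBddOn_of_bddOnBounded f_below f_above
  have f_lsc : LowerSemicontinuousOn f Om := lowerSemicontinuousOn_ilow dense g_locBdd
  have f_le_ilow_f : ∀ y ∈ Om, f y ≤ Ilow Om Om f y := fun y hy =>
    le_ilow_of_lowerSemicontinuousOn f_locBdd f_lsc (fun _ _ => le_rfl) hy
  have shigh_f_le_g : ∀ y ∈ Om, Shigh Om Om f y ≤ g y := fun y hy =>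
    shigh_le_of_upperSemicontinuousOn f_locBdd hg f_le_g hy
  refine hContPair_of_extremal (fun y hy => (ilow_le f_below hy).trans (le_shigh f_above hy))
    (bddBelowOnBounded_ilow dense f_locBdd) (lowerSemicontinuousOn_ilow dense f_locBdd)
    (fun h h_lsc h_le y hy => ?_)
    (bddAboveOnBounded_shigh dense f_locBdd) (upperSemicontinuousOn_shigh dense f_locBdd)
    (fun h h_usc le_h y hy => ?_)
  · have h_le_g : ∀ z ∈ Om, h z ≤ g z := fun z hz => (h_le z hz).trans (shigh_f_le_g z hz)
    exact (le_ilow_of_lowerSemicontinuousOn g_locBdd h_lsc h_le_g hy).trans (f_le_ilow_f y hy)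
  · have f_le_h : ∀ z ∈ Om, f z ≤ h z := fun z hz => (f_le_ilow_f z hz).trans (le_h z hz)
    exact shigh_le_of_upperSemicontinuousOn f_locBdd h_usc f_le_h hy

theorem hContPair_ilow_of_upperSemicontinuousOn (hg : UpperSemicontinuousOn g Om)
    (habove : BddAboveOnBounded Om g) :
    HContPair Om (Ilow Om Om (Ilow Om Om g)) (Shigh Om Om (Ilow Om Om g)) := by
  rw [← ilow_lowerTrunc Om Om g, inter_self]
  exact hContPair_ilow_of_bddOnBounded (bddBelowOnBounded_lowerTrunc Om g)
    (habove.lowerTrunc Om) (upperSemicontinuousOn_lowerTrunc hg Om)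

theorem hContPair_ilow_shigh (hD : Om ⊆ closure (Om ∩ D)) (hf : LocBddOn Om D f) :
    HContPair Om (Ilow Om Om (Ilow Om Om (Shigh D Om f)))
      (Shigh Om Om (Ilow Om Om (Shigh D Om f))) :=
  hContPair_ilow_of_upperSemicontinuousOn (upperSemicontinuousOn_shigh hD hf)
    (bddAboveOnBounded_shigh hD hf)

theorem hContPair_shigh_ilow (hD : Om ⊆ closure (Om ∩ D)) (hf : LocBddOn Om D f) :
    HContPair Om (Ilow Om Om (Shigh Om Om (Ilow D Om f)))
      (Shigh Om Om (Shigh Om Om (Ilow D Om f))) := by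
  simpa only [ilow_neg, shigh_neg, neg_neg] using (hContPair_ilow_shigh hD hf.neg).neg

end BaireOperators

theorem stmt0_general {n : ℕ} {Om D : Set (Pt n)} {u v : Pt n → ℝ}
    (hD : Om ⊆ closure (Om ∩ D)) (hu : LocBddOn Om D u) (hv : LocBddOn Om D v) :
    HContPair Om (Ilow Om Om (Ilow Om Om (Shigh D Om v)))
      (Shigh Om Om (Ilow Om Om (Shigh D Om v))) ∧
    HContPair Om (Ilow Om Om (Shigh Om Om (Ilow D Om u)))
      (Shigh Om Om (Shigh Om Om (Ilow D Om u))) :=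
  ⟨hContPair_ilow_shigh hD hv, hContPair_shigh_ilow hD hu⟩

theorem stmt0 {n : ℕ} (Om : Set (Pt n)) (u v : Pt n → ℝ)
    (hu : LocBddOn Om Om u) (hv : LocBddOn Om Om v)
    (huv : ∀ x ∈ Om, u x ≤ v x) :
    HContPair Om (Ilow Om Om (Ilow Om Om (Shigh Om Om v)))
      (Shigh Om Om (Ilow Om Om (Shigh Om Om v))) ∧
    HContPair Om (Ilow Om Om (Shigh Om Om (Ilow Om Om u)))
      (Shigh Om Om (Shigh Om Om (Ilow Om Om u))) :=
  stmt0_general (subset_closure_inter_self Om) hu hv
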